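/- arXiv:2202.11369 — 3 statements merged into one kernel-verified Lean document; each statement's English description precedes it below -/
import Mathlib

section
/- Let E be a real inner product space, r ≥ 1 a real number, and x, y ∈ E. Then ⟨‖x‖^{r-1} x − ‖y‖^{r-1} y, x − y⟩ ≥ (1/2) ‖x‖^{r-1} ‖x − y‖^2 + (1/2) ‖y‖^{r-1} ‖x − y‖^2. -/
open Set
open scoped RealInnerProductSpace

section Seminormed

variable {E : Type*} [SeminormedAddCommGroup E] [InnerProductSpace ℝ E]

theorem real_inner_smul_sub_smul_sub (a b : ℝ) (x y : E) :
    ⟪a • x - b • y, x - y⟫ =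
      (a + b) / 2 * ‖x - y‖ ^ 2 + (a - b) * (‖x‖ ^ 2 - ‖y‖ ^ 2) / 2 := by
  rw [norm_sub_sq_real]
  simp only [inner_sub_left, inner_sub_right, real_inner_smul_left, real_inner_self_eq_norm_sq,
    real_inner_comm x y]
  ring

theorem forchheimer_monotone_general {φ : ℝ → ℝ} (hφ : MonotoneOn φ (Ici 0)) (x y : E) :
    1 / 2 * φ ‖x‖ * ‖x - y‖ ^ 2 + 1 / 2 * φ ‖y‖ * ‖x - y‖ ^ 2 ≤
      ⟪φ ‖x‖ • x - φ ‖y‖ • y, x - y⟫ := by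
  have weight_sub_mul_sq_sub_nonneg : 0 ≤ (φ ‖x‖ - φ ‖y‖) * (‖x‖ ^ 2 - ‖y‖ ^ 2) :=
    (hφ.monovaryOn pow_left_monotoneOn).sub_mul_sub_nonneg (norm_nonneg y) (norm_nonneg x)
  rw [real_inner_smul_sub_smul_sub]
  linarith

end Seminormed

/-- Pointwise monotonicity of the Forchheimer nonlinearity:
`⟨‖x‖^{r-1} x − ‖y‖^{r-1} y, x − y⟩ ≥ ½‖x‖^{r-1}‖x−y‖² + ½‖y‖^{r-1}‖x−y‖²`. -/
theorem forchheimer_monotone {E : Type*} [NormedAddCommGroup E] [InnerProductSpace ℝ E]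
    (r : ℝ) (hr : 1 ≤ r) (x y : E) :
    (1 / 2) * ‖x‖ ^ (r - 1) * ‖x - y‖ ^ (2 : ℕ) +
        (1 / 2) * ‖y‖ ^ (r - 1) * ‖x - y‖ ^ (2 : ℕ) ≤
      (inner ℝ (‖x‖ ^ (r - 1) • x - ‖y‖ ^ (r - 1) • y) (x - y) : ℝ) :=
  forchheimer_monotone_general
    (Real.monotoneOn_rpow_Ici_of_exponent_nonneg (sub_nonneg.2 hr)) x y
end

section
/- Let (Ω, μ) be a measure space, d ≥ 1 and r ≥ 1 a real number. Let u, v : Ω → ℝ^d be measurable with ∫_Ω ‖u(x)‖^{r+1} dμ(x) < ∞ and ∫_Ω ‖v(x)‖^{r+1} dμ(x) < ∞. Then ∫_Ω ⟨‖u(x)‖^{r-1} u(x) − ‖v(x)‖^{r-1} v(x), u(x) − v(x)⟩ dμ(x) ≥ (1/2) ∫_Ω ‖u(x)‖^{r-1} ‖u(x) − v(x)‖^2 dμ(x) + (1/2) ∫_Ω ‖v(x)‖^{r-1} ‖u(x) − v(x)‖^2 dμ(x) ≥ 0, all integrals being finite. -/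
open MeasureTheory

/-!
For weights `A`, `B` the identity
`⟨A x - B y, x - y⟩ = ½ A ‖x - y‖² + ½ B ‖x - y‖² + ½ (A - B) (‖x‖² - ‖y‖²)`
reduces the lower bound to the sign of the last term. It is nonnegative when `A = φ ‖x‖` and
`B = φ ‖y‖` with `φ` nondecreasing, since `φ` and squaring are then ordered alike. For
nonnegative weights the same sign also bounds the inner product above by
`2 (A ‖x‖² + B ‖y‖²)`, which makes all integrals finite; for
`φ t = t ^ (r - 1)` this bound involves only `‖x‖ ^ (r + 1)` and `‖y‖ ^ (r + 1)`.
-/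

section Pointwise

variable {E : Type*} [NormedAddCommGroup E] [InnerProductSpace ℝ E] {A B : ℝ} {x y : E}

theorem inner_smul_sub_smul_sub_eq (A B : ℝ) (x y : E) :
    inner ℝ (A • x - B • y) (x - y) =
      1 / 2 * (A * ‖x - y‖ ^ 2) + 1 / 2 * (B * ‖x - y‖ ^ 2) +
        1 / 2 * ((A - B) * (‖x‖ ^ 2 - ‖y‖ ^ 2)) := by
  simp only [norm_sub_sq_real, inner_sub_left, inner_sub_right, real_inner_smul_left,
    real_inner_self_eq_norm_sq, real_inner_comm x y]
  ring

theorem half_mul_norm_sub_sq_add_le_inner (h : 0 ≤ (A - B) * (‖x‖ ^ 2 - ‖y‖ ^ 2)) :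
    1 / 2 * (A * ‖x - y‖ ^ 2) + 1 / 2 * (B * ‖x - y‖ ^ 2) ≤
      inner ℝ (A • x - B • y) (x - y) := by
  rw [inner_smul_sub_smul_sub_eq]
  linarith

theorem inner_smul_sub_smul_sub_le (hA : 0 ≤ A) (hB : 0 ≤ B)
    (h : 0 ≤ (A - B) * (‖x‖ ^ 2 - ‖y‖ ^ 2)) :
    inner ℝ (A • x - B • y) (x - y) ≤ 2 * (A * ‖x‖ ^ 2 + B * ‖y‖ ^ 2) := by
  have norm_sub_sq_le : ‖x - y‖ ^ 2 ≤ 2 * (‖x‖ ^ 2 + ‖y‖ ^ 2) :=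
    (pow_le_pow_left₀ (norm_nonneg _) (norm_sub_le x y) 2).trans add_sq_le
  calc inner ℝ (A • x - B • y) (x - y)
      = 1 / 2 * ((A + B) * ‖x - y‖ ^ 2) + 1 / 2 * ((A - B) * (‖x‖ ^ 2 - ‖y‖ ^ 2)) := by
        rw [inner_smul_sub_smul_sub_eq]
        ring
    _ ≤ 1 / 2 * ((A + B) * (2 * (‖x‖ ^ 2 + ‖y‖ ^ 2))) +
          1 / 2 * ((A - B) * (‖x‖ ^ 2 - ‖y‖ ^ 2)) := by gcongr
    _ = 2 * (A * ‖x‖ ^ 2 + B * ‖y‖ ^ 2) - 1 / 2 * ((A - B) * (‖x‖ ^ 2 - ‖y‖ ^ 2)) := by ring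
    _ ≤ 2 * (A * ‖x‖ ^ 2 + B * ‖y‖ ^ 2) := by linarith

end Pointwise

section Weight

open Set

variable {φ : ℝ → ℝ}

theorem sub_mul_sq_sub_sq_nonneg_of_monotoneOn (hφ : MonotoneOn φ (Ici 0)) {a b : ℝ}
    (ha : 0 ≤ a) (hb : 0 ≤ b) : 0 ≤ (φ a - φ b) * (a ^ 2 - b ^ 2) :=
  monovaryOn_iff_forall_mul_nonneg.1 (hφ.monovaryOn pow_left_monotoneOn) hb ha

variable {Ω E : Type*} [MeasurableSpace Ω] {μ : Measure Ω} [NormedAddCommGroup E] {u v : Ω → E}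

theorem comp_norm_nonneg_of_monotoneOn (hφ : MonotoneOn φ (Ici 0)) (hφ₀ : 0 ≤ φ 0) (y : E) :
    0 ≤ φ ‖y‖ :=
  hφ₀.trans (hφ self_mem_Ici (norm_nonneg y) (norm_nonneg y))

theorem aestronglyMeasurable_comp_norm_of_monotoneOn (hφ : MonotoneOn φ (Ici 0))
    (hu : AEStronglyMeasurable u μ) : AEStronglyMeasurable (fun x => φ ‖u x‖) μ := by
  have monotone_extension : Monotone fun t => φ (max 0 t) := fun s t hst =>
    hφ (le_max_left 0 s) (le_max_left 0 t) (max_le_max_left 0 hst)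
  simpa only [Function.comp_def, max_eq_right (norm_nonneg _)] using
    (monotone_extension.measurable.comp_aemeasurable hu.norm.aemeasurable).aestronglyMeasurable

variable [InnerProductSpace ℝ E]

theorem integrable_inner_smul_sub_smul_sub (hφ : MonotoneOn φ (Ici 0)) (hφ₀ : 0 ≤ φ 0)
    (hu : AEStronglyMeasurable u μ) (hv : AEStronglyMeasurable v μ)
    (hui : Integrable (fun x => φ ‖u x‖ * ‖u x‖ ^ 2) μ)
    (hvi : Integrable (fun x => φ ‖v x‖ * ‖v x‖ ^ 2) μ) :
    Integrable (fun x => inner ℝ (φ ‖u x‖ • u x - φ ‖v x‖ • v x) (u x - v x)) μ := by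
  have hφu := aestronglyMeasurable_comp_norm_of_monotoneOn hφ hu
  have hφv := aestronglyMeasurable_comp_norm_of_monotoneOn hφ hv
  refine ((hui.add hvi).const_mul 2).mono'
    (((hφu.smul hu).sub (hφv.smul hv)).inner (hu.sub hv)) (.of_forall fun x => ?_)
  have hu_weight : 0 ≤ φ ‖u x‖ := comp_norm_nonneg_of_monotoneOn hφ hφ₀ (u x)
  have hv_weight : 0 ≤ φ ‖v x‖ := comp_norm_nonneg_of_monotoneOn hφ hφ₀ (v x)
  have ordered : 0 ≤ (φ ‖u x‖ - φ ‖v x‖) * (‖u x‖ ^ 2 - ‖v x‖ ^ 2) :=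
    sub_mul_sq_sub_sq_nonneg_of_monotoneOn hφ (norm_nonneg _) (norm_nonneg _)
  have inner_nonneg : 0 ≤ inner ℝ (φ ‖u x‖ • u x - φ ‖v x‖ • v x) (u x - v x) :=
    le_trans (by positivity) (half_mul_norm_sub_sq_add_le_inner ordered)
  rw [Real.norm_of_nonneg inner_nonneg]
  exact inner_smul_sub_smul_sub_le hu_weight hv_weight ordered

theorem integrable_mul_norm_sub_sq (hφ : MonotoneOn φ (Ici 0)) (hφ₀ : 0 ≤ φ 0)
    (hu : AEStronglyMeasurable u μ) (hv : AEStronglyMeasurable v μ)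
    (hui : Integrable (fun x => φ ‖u x‖ * ‖u x‖ ^ 2) μ)
    (hvi : Integrable (fun x => φ ‖v x‖ * ‖v x‖ ^ 2) μ) :
    Integrable (fun x => φ ‖u x‖ * ‖u x - v x‖ ^ 2) μ := by
  have weight_nonneg (y : E) : 0 ≤ φ ‖y‖ := comp_norm_nonneg_of_monotoneOn hφ hφ₀ y
  refine ((integrable_inner_smul_sub_smul_sub hφ hφ₀ hu hv hui hvi).const_mul 2).mono'
    ((aestronglyMeasurable_comp_norm_of_monotoneOn hφ hu).mul ((hu.sub hv).norm.pow 2))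
    (.of_forall fun x => ?_)
  have lower_bound := half_mul_norm_sub_sq_add_le_inner
    (sub_mul_sq_sub_sq_nonneg_of_monotoneOn hφ (norm_nonneg (u x)) (norm_nonneg (v x)))
  have hu_nonneg := mul_nonneg (weight_nonneg (u x)) (sq_nonneg ‖u x - v x‖)
  have hv_nonneg := mul_nonneg (weight_nonneg (v x)) (sq_nonneg ‖u x - v x‖)
  rw [Real.norm_of_nonneg hu_nonneg]
  linarith

theorem forchheimer_monotone_integral_general (hφ : MonotoneOn φ (Ici 0)) (hφ₀ : 0 ≤ φ 0)
    (hu : AEStronglyMeasurable u μ) (hv : AEStronglyMeasurable v μ)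
    (hui : Integrable (fun x => φ ‖u x‖ * ‖u x‖ ^ 2) μ)
    (hvi : Integrable (fun x => φ ‖v x‖ * ‖v x‖ ^ 2) μ) :
    Integrable (fun x => inner ℝ (φ ‖u x‖ • u x - φ ‖v x‖ • v x) (u x - v x)) μ ∧
      Integrable (fun x => φ ‖u x‖ * ‖u x - v x‖ ^ 2) μ ∧
      Integrable (fun x => φ ‖v x‖ * ‖u x - v x‖ ^ 2) μ ∧
      (1 / 2) * ∫ x, φ ‖u x‖ * ‖u x - v x‖ ^ 2 ∂μ +
          (1 / 2) * ∫ x, φ ‖v x‖ * ‖u x - v x‖ ^ 2 ∂μ ≤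
        ∫ x, inner ℝ (φ ‖u x‖ • u x - φ ‖v x‖ • v x) (u x - v x) ∂μ ∧
      0 ≤ (1 / 2) * ∫ x, φ ‖u x‖ * ‖u x - v x‖ ^ 2 ∂μ +
          (1 / 2) * ∫ x, φ ‖v x‖ * ‖u x - v x‖ ^ 2 ∂μ := by
  have h_inner := integrable_inner_smul_sub_smul_sub hφ hφ₀ hu hv hui hvi
  have h_left := integrable_mul_norm_sub_sq hφ hφ₀ hu hv hui hvi
  have h_right : Integrable (fun x => φ ‖v x‖ * ‖u x - v x‖ ^ 2) μ := by
    simpa only [norm_sub_rev] using integrable_mul_norm_sub_sq hφ hφ₀ hv hu hvi hui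
  refine ⟨h_inner, h_left, h_right, ?_, ?_⟩
  · rw [← integral_const_mul, ← integral_const_mul,
      ← integral_add (h_left.const_mul _) (h_right.const_mul _)]
    exact integral_mono ((h_left.const_mul _).add (h_right.const_mul _)) h_inner fun x =>
      half_mul_norm_sub_sq_add_le_inner
        (sub_mul_sq_sub_sq_nonneg_of_monotoneOn hφ (norm_nonneg _) (norm_nonneg _))
  · have integral_nonneg_of_weight (w : Ω → E) :
        0 ≤ ∫ x, φ ‖w x‖ * ‖u x - v x‖ ^ 2 ∂μ := integral_nonneg fun x =>
      mul_nonneg (comp_norm_nonneg_of_monotoneOn hφ hφ₀ _) (sq_nonneg _)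
    linarith [integral_nonneg_of_weight u, integral_nonneg_of_weight v]

end Weight

theorem rpow_sub_one_mul_sq {a r : ℝ} (ha : 0 ≤ a) (hr : r + 1 ≠ 0) :
    a ^ (r - 1) * a ^ 2 = a ^ (r + 1) := by
  have exponent_eq : r - 1 + (2 : ℕ) = r + 1 := by
    push_cast
    ring
  rw [← Real.rpow_add_natCast' ha (exponent_eq ▸ hr), exponent_eq]

theorem integrable_norm_rpow_sub_one_mul_sq {Ω E : Type*} [MeasurableSpace Ω] {μ : Measure Ω}
    [NormedAddCommGroup E] {r : ℝ} (hr : r + 1 ≠ 0) {u : Ω → E} (hu : AEStronglyMeasurable u μ)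
    (hui : ∫⁻ x, ENNReal.ofReal (‖u x‖ ^ (r + 1)) ∂μ < ⊤) :
    Integrable (fun x => ‖u x‖ ^ (r - 1) * ‖u x‖ ^ 2) μ := by
  simp only [rpow_sub_one_mul_sq (norm_nonneg _) hr]
  exact (lintegral_ofReal_ne_top_iff_integrable
    (hu.norm.aemeasurable.pow_const _).aestronglyMeasurable
    (.of_forall fun x => Real.rpow_nonneg (norm_nonneg _) _)).1 hui.ne

/-- Integrated monotonicity of the Forchheimer nonlinearity `u ↦ |u|^{r-1}u`:
all integrals are finite and
`∫ ⟨‖u‖^{r-1}u − ‖v‖^{r-1}v, u − v⟩ ≥ ½∫‖u‖^{r-1}‖u−v‖² + ½∫‖v‖^{r-1}‖u−v‖² ≥ 0`. -/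
theorem forchheimer_monotone_integral {Ω : Type*} [MeasurableSpace Ω] (μ : Measure Ω)
    (d : ℕ) (hd : 1 ≤ d) (r : ℝ) (hr : 1 ≤ r)
    (u v : Ω → EuclideanSpace ℝ (Fin d)) (hu : Measurable u) (hv : Measurable v)
    (hui : ∫⁻ x, ENNReal.ofReal (‖u x‖ ^ (r + 1)) ∂μ < ⊤)
    (hvi : ∫⁻ x, ENNReal.ofReal (‖v x‖ ^ (r + 1)) ∂μ < ⊤) :
    Integrable (fun x =>
        (inner ℝ (‖u x‖ ^ (r - 1) • u x - ‖v x‖ ^ (r - 1) • v x) (u x - v x) : ℝ)) μ ∧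
      Integrable (fun x => ‖u x‖ ^ (r - 1) * ‖u x - v x‖ ^ (2 : ℕ)) μ ∧
      Integrable (fun x => ‖v x‖ ^ (r - 1) * ‖u x - v x‖ ^ (2 : ℕ)) μ ∧
      ((1 / 2) * ∫ x, ‖u x‖ ^ (r - 1) * ‖u x - v x‖ ^ (2 : ℕ) ∂μ +
          (1 / 2) * ∫ x, ‖v x‖ ^ (r - 1) * ‖u x - v x‖ ^ (2 : ℕ) ∂μ ≤
        ∫ x, (inner ℝ (‖u x‖ ^ (r - 1) • u x - ‖v x‖ ^ (r - 1) • v x) (u x - v x) : ℝ) ∂μ) ∧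
      (0 ≤ (1 / 2) * ∫ x, ‖u x‖ ^ (r - 1) * ‖u x - v x‖ ^ (2 : ℕ) ∂μ +
          (1 / 2) * ∫ x, ‖v x‖ ^ (r - 1) * ‖u x - v x‖ ^ (2 : ℕ) ∂μ) := by
  have hr' : r + 1 ≠ 0 := by linarith
  exact forchheimer_monotone_integral_general (φ := fun t => t ^ (r - 1))
    (Real.monotoneOn_rpow_Ici_of_exponent_nonneg (sub_nonneg.2 hr)) (Real.rpow_nonneg le_rfl _)
    hu.aestronglyMeasurable hv.aestronglyMeasurable
    (integrable_norm_rpow_sub_one_mul_sq hr' hu.aestronglyMeasurable hui)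
    (integrable_norm_rpow_sub_one_mul_sq hr' hv.aestronglyMeasurable hvi)
end

section
/- Let T > 0 and let (w_k)_{k∈ℕ} be a sequence of independent standard one-dimensional Brownian motions on a probability space (Ω, F, P), extended by w_k(t) = 0 for t ≤ 0. For n ∈ ℕ set σ = T/2^n and, for t ∈ [0,T], ẇ^n_k(t) = σ^{-1} ( w_k(⌊t/σ⌋σ) − w_k((⌊t/σ⌋ − 1)σ) ), where ⌊·⌋ is the floor function. Then there exists a constant δ₀ > 0 such that for every δ > δ₀/√T and every t ∈ [0,T], lim_{n→∞} P( sup_{1≤k≤n} sup_{0≤s≤t} |ẇ^n_k(s)| > δ n^{1/2} 2^{n/2} ) = 0. -/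
open MeasureTheory ProbabilityTheory Filter

/-- A standard one-dimensional Brownian motion (extended by `0` for `t ≤ 0`):
measurable marginals, continuous paths, zero for nonpositive times, Gaussian
increments `w t − w s ∼ N(0, t − s)` for `0 ≤ s ≤ t`, and independent increments. -/
structure IsStandardBrownian {Ω : Type*} [MeasurableSpace Ω] (P : Measure Ω)
    (w : ℝ → Ω → ℝ) : Prop where
  meas : ∀ t, Measurable (w t)
  cont : ∀ ω, Continuous fun t => w t ω
  zero_nonpos : ∀ t ≤ (0 : ℝ), ∀ ω, w t ω = 0
  incr_gauss : ∀ s t : ℝ, 0 ≤ s → s ≤ t →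
    P.map (fun ω => w t ω - w s ω) = gaussianReal 0 (Real.toNNReal (t - s))
  incr_indep : ∀ (n : ℕ) (t : Fin (n + 1) → ℝ), Monotone t → 0 ≤ t 0 →
    iIndepFun
      (fun i : Fin n => fun ω => w (t i.succ) ω - w (t i.castSucc) ω) P

/-!
`ẇⁿ_k` is a step function whose values on `[0, T]` are `0` and the `2ⁿ` increment quotients of `w_k`
over a grid of mesh `σ = T/2ⁿ`. A union bound over these and over `k ≤ n`, with the sub-Gaussian
tail `2 exp (-(cσ)²/(2σ))` at `c = δ n^{1/2} 2^{n/2}`, bounds the probability by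
`2 n (2 exp (-δ²T/2))ⁿ`. This tends to `0` as soon as `δ²T > 2 log 2`.
-/

section Tail

variable {Ω : Type*} [MeasurableSpace Ω] {P : Measure Ω} {X : Ω → ℝ} {v : NNReal}

lemma hasSubgaussianMGF_of_map_eq_gaussianReal (hX : P.map X = gaussianReal 0 v) :
    HasSubgaussianMGF X v P where
  integrable_exp_mul t := by
    have : IsProbabilityMeasure (P.map X) := hX ▸ inferInstance
    have := P.isProbabilityMeasure_of_map X
    rw [← mgf_pos_iff, mgf_gaussianReal hX]
    exact Real.exp_pos _
  mgf_le t := by simp [mgf_gaussianReal hX]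

lemma isFiniteMeasure_of_hasSubgaussianMGF (hX : HasSubgaussianMGF X v P) :
    IsFiniteMeasure P := by
  simpa [integrable_const_iff] using hX.integrable_exp_mul 0

lemma measure_lt_abs_le_of_hasSubgaussianMGF (hX : HasSubgaussianMGF X v P) {a : ℝ}
    (ha : 0 ≤ a) :
    P {ω | a < |X ω|} ≤ ENNReal.ofReal (2 * Real.exp (-a ^ 2 / (2 * v))) := by
  have := isFiniteMeasure_of_hasSubgaussianMGF hX
  have hsub : {ω | a < |X ω|} ⊆ {ω | a ≤ X ω} ∪ {ω | a ≤ (-X) ω} := fun ω hω ↦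
    (lt_abs.1 hω).imp (fun h : a < X ω ↦ h.le) (fun h : a < -X ω ↦ h.le)
  rw [← ofReal_measureReal]
  refine ENNReal.ofReal_le_ofReal ?_
  calc P.real {ω | a < |X ω|}
      ≤ P.real {ω | a ≤ X ω} + P.real {ω | a ≤ (-X) ω} :=
        (measureReal_mono hsub).trans (measureReal_union_le _ _)
    _ ≤ 2 * Real.exp (-a ^ 2 / (2 * v)) := by
        rw [two_mul]
        exact add_le_add (hX.measure_ge_le ha) (hX.neg.measure_ge_le ha)

end Tail

/-- The Wong–Zakai approximation with mesh `σ` of the derivative of a path `f`. To be adapted, it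
takes on `[jσ, (j + 1)σ)` the increment quotient of `f` over the preceding grid interval. -/
noncomputable def wongZakaiDeriv (σ : ℝ) (f : ℝ → ℝ) (s : ℝ) : ℝ :=
  (f (⌊s / σ⌋ * σ) - f ((⌊s / σ⌋ - 1) * σ)) / σ

section Grid

variable {σ s t c : ℝ} {N : ℕ}

lemma wongZakaiDeriv_eq_zero_or_exists_eq_div {f : ℝ → ℝ} (hσ : 0 < σ)
    (hf : ∀ t ≤ 0, f t = 0) (hs : 0 ≤ s) (hsN : s ≤ N * σ) :
    wongZakaiDeriv σ f s = 0 ∨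
      ∃ j < N, wongZakaiDeriv σ f s = (f ((j + 1) * σ) - f (j * σ)) / σ := by
  rw [wongZakaiDeriv, ← natCast_floor_eq_intCast_floor (by positivity)]
  have hfloor : ⌊s / σ⌋₊ ≤ N := Nat.floor_le_of_le ((div_le_iff₀ hσ).2 hsN)
  cases hm : ⌊s / σ⌋₊ with
  | zero => left; simp [hf, hσ.le]
  | succ j => exact .inr ⟨j, by lia, by simp⟩

lemma exists_lt_abs_increment_of_lt_iSup_abs_wongZakaiDeriv {ι : Type*} {K : Finset ι}
    {f : ι → ℝ → ℝ} (hσ : 0 < σ) (hf : ∀ k ∈ K, ∀ t ≤ 0, f k t = 0) (htN : t ≤ N * σ)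
    (hc : 0 ≤ c) (hlt : c < ⨆ k ∈ K, ⨆ s : Set.Icc 0 t, |wongZakaiDeriv σ (f k) s|) :
    ∃ k ∈ K, ∃ j < N, c * σ < |f k ((j + 1) * σ) - f k (j * σ)| := by
  contrapose! hlt
  refine Real.iSup_le (fun k ↦ Real.iSup_le (fun hk ↦ Real.iSup_le (fun s ↦ ?_) hc) hc) hc
  obtain hzero | ⟨j, hj, hquot⟩ :=
    wongZakaiDeriv_eq_zero_or_exists_eq_div hσ (hf k hk) s.2.1 (s.2.2.trans htN)
  · rwa [hzero, abs_zero]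
  · rw [hquot, abs_div, abs_of_pos hσ, div_le_iff₀ hσ]
    exact hlt k hk j hj

lemma measure_lt_iSup_abs_wongZakaiDeriv_le {Ω ι : Type*} [MeasurableSpace Ω] {P : Measure Ω}
    {w : ι → ℝ → Ω → ℝ} {K : Finset ι} {v : NNReal} (hσ : 0 < σ)
    (hw₀ : ∀ k ∈ K, ∀ t ≤ 0, ∀ ω, w k t ω = 0)
    (hw : ∀ k ∈ K, ∀ j < N,
      HasSubgaussianMGF (fun ω ↦ w k ((j + 1) * σ) ω - w k (j * σ) ω) v P)
    (htN : t ≤ N * σ) (hc : 0 ≤ c) :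
    P {ω | c < ⨆ k ∈ K, ⨆ s : Set.Icc 0 t, |wongZakaiDeriv σ (w k · ω) s|} ≤
      ENNReal.ofReal (K.card * (N * (2 * Real.exp (-(c * σ) ^ 2 / (2 * v))))) := by
  let E (k : ι) (j : ℕ) : Set Ω := {ω | c * σ < |w k ((j + 1) * σ) ω - w k (j * σ) ω|}
  have hcover : {ω | c < ⨆ k ∈ K, ⨆ s : Set.Icc 0 t, |wongZakaiDeriv σ (w k · ω) s|} ⊆
      ⋃ k ∈ K, ⋃ j ∈ Finset.range N, E k j := fun ω hω ↦ by
    simpa [E] using exists_lt_abs_increment_of_lt_iSup_abs_wongZakaiDeriv hσ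
      (fun k hk t ht ↦ hw₀ k hk t ht ω) htN hc hω
  have htail (k) (hk : k ∈ K) (j) (hj : j ∈ Finset.range N) :
      P (E k j) ≤ ENNReal.ofReal (2 * Real.exp (-(c * σ) ^ 2 / (2 * v))) :=
    measure_lt_abs_le_of_hasSubgaussianMGF (hw k hk j (Finset.mem_range.1 hj)) (by positivity)
  calc P {ω | c < ⨆ k ∈ K, ⨆ s : Set.Icc 0 t, |wongZakaiDeriv σ (w k · ω) s|}
      ≤ ∑ k ∈ K, ∑ j ∈ Finset.range N, P (E k j) :=
        (measure_mono hcover).trans <| (measure_biUnion_finset_le _ _).trans <|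
          Finset.sum_le_sum fun _ _ ↦ measure_biUnion_finset_le _ _
    _ ≤ ∑ k ∈ K, ∑ j ∈ Finset.range N,
          ENNReal.ofReal (2 * Real.exp (-(c * σ) ^ 2 / (2 * v))) :=
        Finset.sum_le_sum fun k hk ↦ Finset.sum_le_sum (htail k hk)
    _ = ENNReal.ofReal (K.card * (N * (2 * Real.exp (-(c * σ) ^ 2 / (2 * v))))) := by
        simp [ENNReal.ofReal_mul]

end Grid

section Dyadic

variable {T δ : ℝ}

lemma two_mul_exp_neg_sq_mul_div_two_lt_one (hT : 0 < T) (hδ : √(2 * Real.log 2) / √T < δ) :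
    2 * Real.exp (-(δ ^ 2 * T) / 2) < 1 := by
  have hlog : 2 * Real.log 2 < δ ^ 2 * T := by
    rw [div_lt_iff₀ (Real.sqrt_pos.2 hT)] at hδ
    have hsq := Real.lt_sq_of_sqrt_lt hδ
    rwa [mul_pow, Real.sq_sqrt hT.le] at hsq
  calc 2 * Real.exp (-(δ ^ 2 * T) / 2)
      = Real.exp (Real.log 2 + -(δ ^ 2 * T) / 2) := by
        rw [Real.exp_add, Real.exp_log two_pos]
    _ < 1 := Real.exp_lt_one_iff.2 (by linarith)

lemma sq_mul_rpow_half_mul_two_rpow_half (δ : ℝ) (n : ℕ) :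
    (δ * (n : ℝ) ^ ((1 : ℝ) / 2) * (2 : ℝ) ^ ((n : ℝ) / 2)) ^ 2 = δ ^ 2 * n * 2 ^ n := by
  rw [mul_pow, mul_pow, ← Real.sqrt_eq_rpow, Real.sq_sqrt n.cast_nonneg,
    ← Real.rpow_mul_natCast two_pos.le, Nat.cast_two, div_mul_cancel₀ _ two_ne_zero,
    Real.rpow_natCast]

lemma measure_lt_iSup_abs_wongZakaiDeriv_dyadic_le {Ω : Type*} [MeasurableSpace Ω]
    {P : Measure Ω} {w : ℕ → ℝ → Ω → ℝ} {t : ℝ} (hT : 0 < T)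
    (hw₀ : ∀ k, ∀ t ≤ 0, ∀ ω, w k t ω = 0)
    (hw : ∀ k s t, 0 ≤ s → s ≤ t →
      HasSubgaussianMGF (fun ω ↦ w k t ω - w k s ω) (t - s).toNNReal P)
    (hδ : 0 ≤ δ) (htT : t ≤ T) (n : ℕ) :
    P {ω | δ * (n : ℝ) ^ ((1 : ℝ) / 2) * (2 : ℝ) ^ ((n : ℝ) / 2) <
      ⨆ k ∈ Finset.Icc 1 n, ⨆ s : Set.Icc 0 t, |wongZakaiDeriv (T / 2 ^ n) (w k · ω) s|} ≤
      ENNReal.ofReal (2 * (n * (2 * Real.exp (-(δ ^ 2 * T) / 2)) ^ n)) := by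
  have hσ : 0 < T / 2 ^ n := by positivity
  have hincr (k : ℕ) (_ : k ∈ Finset.Icc 1 n) (j : ℕ) (_ : j < 2 ^ n) :
      HasSubgaussianMGF (fun ω ↦ w k ((j + 1) * (T / 2 ^ n)) ω - w k (j * (T / 2 ^ n)) ω)
        (T / 2 ^ n).toNNReal P := by
    have h := hw k (j * (T / 2 ^ n)) ((j + 1) * (T / 2 ^ n)) (by positivity) (by gcongr; simp)
    rwa [← sub_mul, add_sub_cancel_left, one_mul] at h
  have htN : t ≤ (2 ^ n : ℕ) * (T / 2 ^ n) := by
    rwa [Nat.cast_pow, Nat.cast_two, mul_div_cancel₀ _ (by positivity)]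
  refine (measure_lt_iSup_abs_wongZakaiDeriv_le hσ (fun k _ ↦ hw₀ k) hincr htN
    (by positivity)).trans_eq (congrArg ENNReal.ofReal ?_)
  have hexponent : -(δ * (n : ℝ) ^ ((1 : ℝ) / 2) * (2 : ℝ) ^ ((n : ℝ) / 2) * (T / 2 ^ n)) ^ 2 /
      (2 * (T / 2 ^ n)) = n * (-(δ ^ 2 * T) / 2) := by
    rw [mul_pow, sq_mul_rpow_half_mul_two_rpow_half]
    field
  rw [Real.coe_toNNReal _ hσ.le, hexponent, Real.exp_nat_mul, mul_pow, Nat.card_Icc]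
  push_cast
  ring

end Dyadic

theorem wong_zakai_sup_single_general {T : ℝ} (hT : 0 < T) {Ω : Type*} [MeasurableSpace Ω]
    {P : Measure Ω} {w : ℕ → ℝ → Ω → ℝ} (hw₀ : ∀ k, ∀ t ≤ 0, ∀ ω, w k t ω = 0)
    (hw : ∀ k s t, 0 ≤ s → s ≤ t →
      HasSubgaussianMGF (fun ω ↦ w k t ω - w k s ω) (t - s).toNNReal P)
    {δ : ℝ} (hδ : √(2 * Real.log 2) / √T < δ) {t : ℝ} (ht : t ∈ Set.Icc 0 T) :
    Tendsto (fun n : ℕ ↦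
      P {ω | δ * (n : ℝ) ^ ((1 : ℝ) / 2) * (2 : ℝ) ^ ((n : ℝ) / 2) <
        ⨆ k ∈ Finset.Icc 1 n, ⨆ s : Set.Icc 0 t, |wongZakaiDeriv (T / 2 ^ n) (w k · ω) s|})
      atTop (nhds 0) := by
  have hδ₀ : 0 ≤ δ := le_trans (by positivity) hδ.le
  have hlim : Tendsto
      (fun n : ℕ ↦ ENNReal.ofReal (2 * (n * (2 * Real.exp (-(δ ^ 2 * T) / 2)) ^ n)))
      atTop (nhds 0) := by
    simpa using ENNReal.tendsto_ofReal ((tendsto_self_mul_const_pow_of_lt_one (by positivity)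
      (two_mul_exp_neg_sq_mul_div_two_lt_one hT hδ)).const_mul 2)
  exact tendsto_of_tendsto_of_tendsto_of_le_of_le tendsto_const_nhds hlim (fun _ ↦ zero_le)
    (measure_lt_iSup_abs_wongZakaiDeriv_dyadic_le hT hw₀ hw hδ₀ ht.2)

/-- Wong–Zakai estimate (Lemma 2.1 of \cite{ICAM}),
first form: there is `δ₀ > 0` such that for every `δ > δ₀/√T` and `t ∈ [0,T]`,
`P(sup_{1≤k≤n} sup_{0≤s≤t} |ẇⁿ_k(s)| > δ n^{1/2} 2^{n/2}) → 0` as `n → ∞`,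
where `ẇⁿ_k(s) = σ⁻¹(w_k(⌊s/σ⌋σ) − w_k((⌊s/σ⌋−1)σ))` and `σ = T/2ⁿ`. -/
theorem wong_zakai_sup_single (T : ℝ) (hT : 0 < T)
    {Ω : Type*} [MeasurableSpace Ω] (P : Measure Ω) [IsProbabilityMeasure P]
    (w : ℕ → ℝ → Ω → ℝ) (hBM : ∀ k, IsStandardBrownian P (w k))
    (hindep : iIndepFun
      (fun (k : ℕ) (ω : Ω) (t : ℝ) => w k t ω) P) :
    ∃ δ₀ : ℝ, 0 < δ₀ ∧ ∀ δ : ℝ, δ₀ / Real.sqrt T < δ → ∀ t ∈ Set.Icc (0 : ℝ) T,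
      Tendsto (fun n : ℕ =>
        P {ω | δ * (n : ℝ) ^ ((1 : ℝ) / 2) * (2 : ℝ) ^ ((n : ℝ) / 2) <
          ⨆ k ∈ Finset.Icc 1 n, ⨆ s : Set.Icc (0 : ℝ) t,
            |(w k ((⌊(s : ℝ) / (T / 2 ^ n)⌋ : ℝ) * (T / 2 ^ n)) ω -
                w k (((⌊(s : ℝ) / (T / 2 ^ n)⌋ : ℝ) - 1) * (T / 2 ^ n)) ω) /
              (T / 2 ^ n)|})
        atTop (nhds 0) :=
  ⟨√(2 * Real.log 2), by positivity, fun _ hδ _ ht ↦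
    wong_zakai_sup_single_general hT (fun k ↦ (hBM k).zero_nonpos) (fun k s t hs hst ↦
      hasSubgaussianMGF_of_map_eq_gaussianReal ((hBM k).incr_gauss s t hs hst)) hδ ht⟩
end
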